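/- Let σ₁,…,σₙ and τ₁,…,τ_p be positive integers, with anisotropic dilations δ_λ on ℝⁿ, E_λ on ℝᵖ, and D_λ(x,ξ) = (δ_λ(x), E_λ(ξ)) on ℝᴺ = ℝⁿ×ℝᵖ. For j = 1,…,m let ν_j be a positive integer, let X_j be the smooth vector field on ℝⁿ with polynomial coefficients a_{j,1},…,a_{j,n} satisfying a_{j,i}(δ_λ(x)) = λ^{σ_i−ν_j} a_{j,i}(x) for all λ>0 and x, and let X̃_j = X_j + R_j be the vector field on ℝᴺ, where (R_j U)(x,ξ) = Σ_{l=1}^p r_{j,l}(x,ξ) ∂U/∂ξ_l(x,ξ) with each r_{j,l} a polynomial function satisfying r_{j,l}(D_λ(x,ξ)) = λ^{τ_l−ν_j} r_{j,l}(x,ξ) for all λ>0 and (x,ξ). Then for every k ≥ 1 and all indices i₁,…,i_k ∈ {1,…,m} there exist a finite set S of pairs of multi-indices (α,β) ∈ ℕⁿ×ℕᵖ with β ≠ 0, and for each (α,β) ∈ S and each γ ∈ ℕᵖ with H_E(γ) ≤ H_E(β)−1 a polynomial function c_{α,β,γ} : ℝⁿ → ℝ, such that for every smooth U : ℝᴺ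 → ℝ and every (x,ξ) ∈ ℝᴺ: (X̃_{i_k}⋯X̃_{i_1}U)(x,ξ) − (X_{i_k}⋯X_{i_1}U)(x,ξ) = Σ_{(α,β)∈S} ( Σ_{γ : H_E(γ) ≤ H_E(β)−1} c_{α,β,γ}(x) ξ^γ ) · (∂_x^α ∂_ξ^β U)(x,ξ), where each X_j acts on functions of (x,ξ) through the x-variables only. -/

import Mathlib

noncomputable section

/-- The directional derivative along `v` of a function on `ℝⁿ × ℝᵖ`. -/
def pdProd (n p : ℕ) (v : (Fin n → ℝ) × (Fin p → ℝ))
    (f : ((Fin n → ℝ) × (Fin p → ℝ)) → ℝ) : ((Fin n → ℝ) × (Fin p → ℝ)) → ℝ :=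
  fun z => fderiv ℝ f z v

/-- The iterated partial derivative `∂_x^α ∂_ξ^β` on functions `ℝⁿ × ℝᵖ → ℝ`, for
multi-indices `α ∈ ℕⁿ`, `β ∈ ℕᵖ`. -/
def pdMix (n p : ℕ) (α : Fin n → ℕ) (β : Fin p → ℕ)
    (f : ((Fin n → ℝ) × (Fin p → ℝ)) → ℝ) : ((Fin n → ℝ) × (Fin p → ℝ)) → ℝ :=
  ((List.ofFn fun i : Fin n => (pdProd n p (Pi.single i 1, 0))^[α i]).foldr (· ∘ ·)
    ((List.ofFn fun l : Fin p => (pdProd n p (0, Pi.single l 1))^[β l]).foldr (· ∘ ·) id)) f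

/-!
Filter the polynomial differential operators in `(x, ξ)` by giving `x_i` and `∂_{x_i}` weight `0`,
`ξ_l` weight `τ_l` and `∂_{ξ_l}` weight `-τ_l`. Each `X_j` has weight at most `0`. A monomial
`x^μ ξ^γ` of `r_{j,l}` satisfies `H_E(γ) ≤ τ_l - ν_j`, so `R_j` has weight at most `-ν_j ≤ -1`.
For a word `w` in the indices,
`X̃_j X̃_w - X_j X_w = X_j (X̃_w - X_w) + R_j X̃_w`
then shows by induction that `X̃_w - X_w` has weight at most `-1`. Writing it with the derivatives
on the right, this bound reads `H_E(γ) ≤ H_E(β) - 1` for each term `c(x) ξ^γ ∂_x^α ∂_ξ^β`, and in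
particular forces `β ≠ 0`.
-/

open MvPolynomial
open scoped Manifold ContDiff

lemma mul_prod_ofFn_pow {M : Type*} [Monoid M] {n : ℕ} {f : Fin n → M}
    (hf : ∀ i j, Commute (f i) (f j)) (α : Fin n → ℕ) (i : Fin n) :
    f i * (List.ofFn fun j => f j ^ α j).prod =
      (List.ofFn fun j => f j ^ (α + Pi.single i 1 : Fin n → ℕ) j).prod := by
  induction n with
  | zero => exact i.elim0
  | succ n ih =>
    simp only [List.ofFn_succ, List.prod_cons]
    cases i using Fin.cases with
    | zero => simp [← mul_assoc, pow_succ']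
    | succ i =>
      rw [← mul_assoc, ((hf i.succ 0).pow_right _).eq, mul_assoc,
        ih (fun _ _ => hf _ _) (fun j => α j.succ) i]
      simp [Pi.single_apply]

lemma foldr_comp_ofFn_apply {B C : Type*} {m : ℕ} (F : Fin m → C → C) (g : B → C) (b : B) :
    (List.ofFn F).foldr (· ∘ ·) g b = (List.finRange m).foldr F (g b) := by
  rw [List.ofFn_eq_map, List.foldr_map]
  exact (List.foldr_hom (fun h : B → C => h b) fun _ _ => rfl).symm

lemma list_prod_apply_of_semiconj {J R A B : Type*} [Semiring R] [AddCommMonoid A] [Module R A]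
    {f : A → B} {T : J → Module.End R A} {F : J → B → B}
    (hTF : ∀ j, Function.Semiconj f (T j) (F j)) (L : List J) (a : A) :
    f ((L.map T).prod a) = L.foldr F (f a) := by
  induction L with
  | nil => rfl
  | cons j L ih => simp [(hTF j).eq, ih]

section PolynomialWeight

variable {κ R M : Type*} [CommSemiring R]

/-- The polynomials all of whose monomials have weight at most `d`, where the variable `k` has
weight `w k`. -/
def weightLE (R : Type*) [CommSemiring R] [AddCommMonoid M] [LE M] (w : κ → M) (d : M) :
    Submodule R (MvPolynomial κ R) :=
  restrictSupport R {μ | Finsupp.weight w μ ≤ d}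

lemma mem_weightLE [AddCommMonoid M] [LE M] {w : κ → M} {d : M} {P : MvPolynomial κ R} :
    P ∈ weightLE R w d ↔ ∀ μ ∈ P.support, Finsupp.weight w μ ≤ d :=
  Iff.rfl

lemma mul_mem_weightLE [AddCommMonoid M] [PartialOrder M] [IsOrderedAddMonoid M] {w : κ → M}
    {d e : M} {P Q : MvPolynomial κ R} (hP : P ∈ weightLE R w d)
    (hQ : Q ∈ weightLE R w e) : P * Q ∈ weightLE R w (d + e) := by
  classical
  refine mem_weightLE.2 fun μ hμ => ?_
  obtain ⟨μ₁, h₁, μ₂, h₂, rfl⟩ := Finset.mem_add.1 (support_mul P Q hμ)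
  exact (map_add (Finsupp.weight w) μ₁ μ₂).trans_le (add_le_add (hP h₁) (hQ h₂))

lemma pderiv_mem_weightLE [AddCommGroup M] [PartialOrder M] [IsOrderedAddMonoid M] {w : κ → M}
    {d : M} {P : MvPolynomial κ R} (hP : P ∈ weightLE R w d) (k : κ) :
    pderiv k P ∈ weightLE R w (d - w k) := by
  refine mem_weightLE.2 fun μ hμ => ?_
  have hcoeff : coeff (μ + Finsupp.single k 1) P ≠ 0 := by
    rw [mem_support_iff, coeff_pderiv] at hμ
    exact left_ne_zero_of_mul hμ
  have hweight := mem_weightLE.1 hP _ (mem_support_iff.2 hcoeff)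
  rw [map_add, Finsupp.weight_single, one_smul] at hweight
  exact le_sub_iff_add_le.2 hweight

lemma isWeightedHomogeneous_of_eval_zpow_mul {K : Type*} [Field K] [LinearOrder K]
    [IsStrictOrderedRing K] [Finite κ] {w : κ → ℤ} {d : ℤ} {P : MvPolynomial κ K} {c : K}
    (hc : 1 < c) (hP : ∀ y, eval (fun k => c ^ w k * y k) P = c ^ d * eval y P) :
    IsWeightedHomogeneous w P d := by
  classical
  cases nonempty_fintype κ
  have hc0 : c ≠ 0 := (zero_lt_one.trans hc).ne'
  have scaled_monomial (μ : κ →₀ ℕ) (y : κ → K) :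
      ∏ k, (c ^ w k * y k) ^ μ k = c ^ Finsupp.weight w μ * ∏ k, y k ^ μ k := by
    have hpow (s : Finset κ) : c ^ ∑ k ∈ s, μ k • w k = ∏ k ∈ s, (c ^ w k) ^ μ k := by
      induction s using Finset.cons_induction with
      | empty => simp
      | cons k s hk ih =>
        rw [Finset.sum_cons, Finset.prod_cons, zpow_add₀ hc0, ih, nsmul_eq_mul,
          mul_comm (μ k : ℤ), zpow_mul, zpow_natCast]
    simp only [mul_pow, Finset.prod_mul_distrib, Finsupp.weight_eq_sum, hpow]
  have hsum : ∑ μ ∈ P.support,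
      monomial μ (coeff μ P * (c ^ Finsupp.weight w μ - c ^ d)) = 0 := by
    refine funext fun y => ?_
    have hy := hP y
    simp only [eval_eq', scaled_monomial] at hy
    rw [← sub_eq_zero, Finset.mul_sum, ← Finset.sum_sub_distrib] at hy
    rw [map_sum, map_zero, ← hy]
    refine Finset.sum_congr rfl fun μ _ => ?_
    rw [eval_monomial, Finsupp.prod_fintype _ _ fun _ => pow_zero _]
    ring
  intro μ hμ
  have hcoeff := congrArg (coeff μ) hsum
  simp only [coeff_sum, coeff_monomial, Finset.sum_ite_eq', mem_support_iff.2 hμ, if_true,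
    coeff_zero, mul_eq_zero, hμ, false_or, sub_eq_zero] at hcoeff
  exact zpow_right_injective₀ (zero_lt_one.trans hc) hc.ne' hcoeff

/-- The homogeneity bounds the degree in the second group of variables alone because the first
group contributes a nonnegative weight. -/
lemma sum_inr_mul_lt_of_eval_pow_mul {ι κ K : Type*} [Finite ι] [Fintype κ] [Field K]
    [LinearOrder K] [IsStrictOrderedRing K] {σ : ι → ℕ} {τ : κ → ℕ} {t ν : ℕ} (hν : 0 < ν)
    {P : MvPolynomial (ι ⊕ κ) K} {c : K} (hc : 1 < c)
    (hP : ∀ x ξ, eval (Sum.elim (fun i => c ^ σ i * x i) fun k => c ^ τ k * ξ k) P =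
      c ^ ((t : ℤ) - ν) * eval (Sum.elim x ξ) P) {μ : ι ⊕ κ →₀ ℕ} (hμ : μ ∈ P.support) :
    ∑ k, μ (.inr k) * τ k < t := by
  cases nonempty_fintype ι
  have hhom : IsWeightedHomogeneous (fun k => ((Sum.elim σ τ k : ℕ) : ℤ)) P (t - ν) := by
    refine isWeightedHomogeneous_of_eval_zpow_mul hc fun y => ?_
    rw [← Sum.elim_comp_inl_inr y, ← hP]
    congr 2
    ext (i | k) <;> simp
  have hweight : (∑ i, μ (.inl i) * σ i : ℕ) + (∑ k, μ (.inr k) * τ k : ℕ) = (t : ℤ) - ν := by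
    simpa [Finsupp.weight_eq_sum] using hhom (mem_support_iff.1 hμ)
  omega

end PolynomialWeight

lemma monomial_eq_rename_inl_mul_prod {ι κ R : Type*} [Finite ι] [Fintype κ] [CommSemiring R]
    (μ : ι ⊕ κ →₀ ℕ) (c : R) :
    monomial μ c = rename Sum.inl (monomial (Finsupp.sumFinsuppEquivProdFinsupp μ).1 c) *
      ∏ k, X (.inr k) ^ μ (.inr k) := by
  cases nonempty_fintype ι
  simp only [monomial_eq, Finsupp.prod_fintype, pow_zero, implies_true, Fintype.prod_sum_type,
    map_mul, rename_C, map_prod, map_pow, rename_X, Finsupp.fst_sumFinsuppEquivProdFinsupp,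
    mul_assoc]

section WeightFiltration

variable {κ R A M : Type*} [CommSemiring R] [CommRing A] [Algebra R A] [AddCommGroup M]
  [PartialOrder M]

lemma derivation_mul_smul (D : Derivation R A A) (f : A) (T : Module.End R A) :
    (D : Module.End R A) * f • T = D f • T + f • ((D : Module.End R A) * T) := by
  ext g
  simp [mul_comm, add_comm]

lemma derivation_aeval [DecidableEq κ] {D : Derivation R A A} {x : κ → A} {k : κ}
    (hD : ∀ j, D (x j) = Pi.single (M := fun _ => A) k 1 j) (P : MvPolynomial κ R) :
    D (aeval x P) = aeval x (pderiv k P) := by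
  induction P using MvPolynomial.induction_on with
  | C a => simp
  | add P Q hP hQ => simp only [map_add, hP, hQ]
  | mul_X P j hP =>
    simp only [map_mul, aeval_X, Derivation.leibniz, smul_eq_mul, hP, hD, pderiv_X, map_add,
      Pi.single_apply]
    split_ifs <;> simp

/-- The differential operators of weight at most `d`, when the coordinate `x k` has weight `w k`
and the derivation `D k` has weight `-w k`. They are spanned by products of a polynomial in the
coordinates with a word in the derivations; the letters of the word are not assumed to commute. -/
def weightFiltration (x : κ → A) (D : κ → Derivation R A A) (w : κ → M) (d : M) :
    Submodule R (Module.End R A) :=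
  Submodule.span R {T | ∃ (P : MvPolynomial κ R) (l : List κ),
    P ∈ weightLE R w (d + (l.map w).sum) ∧
      aeval x P • (l.map fun k => (D k : Module.End R A)).prod = T}

variable {x : κ → A} {D : κ → Derivation R A A} {w : κ → M} {d e : M}

lemma one_mem_weightFiltration : (1 : Module.End R A) ∈ weightFiltration x D w 0 :=
  Submodule.subset_span ⟨1, [], (monomial_mem_restrictSupport R).2 (.inl (by simp)), by simp⟩

variable [IsOrderedAddMonoid M]

lemma weightFiltration_mono (h : d ≤ e) : weightFiltration x D w d ≤ weightFiltration x D w e := by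
  refine Submodule.span_mono ?_
  rintro _ ⟨P, l, hP, rfl⟩
  exact ⟨P, l, fun μ hμ => (hP hμ).trans (add_le_add_left h _), rfl⟩

variable [Fintype κ]

/-- The vector field `∑ k, P k ∂ₖ` with polynomial coefficients `P k`, acting on `A`. -/
def polyVectorField (x : κ → A) (D : κ → Derivation R A A) (P : κ → MvPolynomial κ R) :
    Module.End R A :=
  ∑ k, aeval x (P k) • (D k : Module.End R A)

lemma polyVectorField_add (P Q : κ → MvPolynomial κ R) :
    polyVectorField x D (P + Q) = polyVectorField x D P + polyVectorField x D Q := by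
  simp only [polyVectorField, Pi.add_apply, map_add, add_smul, Finset.sum_add_distrib]

variable [DecidableEq κ]

lemma polyVectorField_mul_mem_weightFiltration
    (hD : ∀ k j, D k (x j) = Pi.single (M := fun _ => A) k 1 j)
    {P : κ → MvPolynomial κ R} (hP : ∀ k, P k ∈ weightLE R w (d + w k))
    {T : Module.End R A} (hT : T ∈ weightFiltration x D w e) :
    polyVectorField x D P * T ∈ weightFiltration x D w (d + e) := by
  rw [polyVectorField, Finset.sum_mul]
  refine sum_mem fun k _ => ?_
  induction hT using Submodule.span_induction with
  | zero => simp
  | add T₁ T₂ _ _ h₁ h₂ => rw [mul_add]; exact add_mem h₁ h₂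
  | smul c T _ h => rw [mul_smul_comm]; exact Submodule.smul_mem _ c h
  | mem T hT =>
    obtain ⟨Q, l, hQ, rfl⟩ := hT
    rw [smul_mul_assoc, derivation_mul_smul, derivation_aeval (hD k), smul_add, smul_smul,
      smul_smul, ← map_mul, ← map_mul]
    refine add_mem (Submodule.subset_span ⟨P k * pderiv k Q, l, ?_, rfl⟩)
      (Submodule.subset_span ⟨P k * Q, k :: l, ?_, rfl⟩)
    · convert mul_mem_weightLE (hP k) (pderiv_mem_weightLE hQ k) using 2
      abel
    · convert mul_mem_weightLE (hP k) hQ using 2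
      rw [List.map_cons, List.sum_cons]
      abel

theorem prod_polyVectorField_add_sub_prod_mem_weightFiltration {J : Type*}
    (hD : ∀ k j, D k (x j) = Pi.single (M := fun _ => A) k 1 j) (hd : d ≤ 0)
    {P Q : J → κ → MvPolynomial κ R} (hP : ∀ j k, P j k ∈ weightLE R w (w k))
    (hQ : ∀ j k, Q j k ∈ weightLE R w (d + w k)) (L : List J) :
    (L.map fun j => polyVectorField x D (P j + Q j)).prod -
      (L.map fun j => polyVectorField x D (P j)).prod ∈ weightFiltration x D w d := by
  have leading_mul_mem {j : J} {e : M} {T : Module.End R A} (hT : T ∈ weightFiltration x D w e) :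
      polyVectorField x D (P j) * T ∈ weightFiltration x D w e := by
    simpa only [zero_add] using
      polyVectorField_mul_mem_weightFiltration hD (d := 0)
        (by simpa only [zero_add] using hP j) hT
  have lower_mul_mem {j : J} {T : Module.End R A} (hT : T ∈ weightFiltration x D w 0) :
      polyVectorField x D (Q j) * T ∈ weightFiltration x D w d := by
    simpa only [add_zero] using polyVectorField_mul_mem_weightFiltration hD (hQ j) hT
  have prod_mem (L : List J) :
      (L.map fun j => polyVectorField x D (P j + Q j)).prod ∈ weightFiltration x D w 0 := by
    induction L with
    | nil => exact one_mem_weightFiltration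
    | cons j L ih =>
      rw [List.map_cons, List.prod_cons, polyVectorField_add, add_mul]
      exact add_mem (leading_mul_mem ih) (weightFiltration_mono hd (lower_mul_mem ih))
  induction L with
  | nil => simp
  | cons j L ih =>
    simp only [List.map_cons, List.prod_cons, polyVectorField_add (P j), add_mul,
      add_sub_right_comm, ← mul_sub]
    exact add_mem (leading_mul_mem ih) (lower_mul_mem (prod_mem L))

end WeightFiltration

section SmoothFunctions

variable {E : Type*} [NormedAddCommGroup E] [NormedSpace ℝ E]

lemma differentiable_contMDiffMap (f : C^∞⟮𝓘(ℝ, E), E; ℝ⟯) : Differentiable ℝ f :=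
  f.contMDiff.contDiff.differentiable (by simp)

lemma contDiff_fderiv_contMDiffMap (f : C^∞⟮𝓘(ℝ, E), E; ℝ⟯) : ContDiff ℝ ∞ (fderiv ℝ f) :=
  f.contMDiff.contDiff.fderiv_right (by simp)

/-- The directional derivative along `v`, as a derivation of the algebra of smooth functions. -/
def dirDeriv (v : E) : Derivation ℝ C^∞⟮𝓘(ℝ, E), E; ℝ⟯ C^∞⟮𝓘(ℝ, E), E; ℝ⟯ :=
  Derivation.mk'
    { toFun f := ⟨fun z => fderiv ℝ f z v,
        ((contDiff_fderiv_contMDiffMap f).clm_apply contDiff_const).contMDiff⟩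
      map_add' f g := by
        ext z
        exact congr($(fderiv_add (differentiable_contMDiffMap f z)
          (differentiable_contMDiffMap g z)) v)
      map_smul' c f := by
        ext z
        exact congr($(fderiv_const_smul (differentiable_contMDiffMap f z) c) v) }
    fun f g => by
      ext z
      exact congr($(fderiv_mul (differentiable_contMDiffMap f z)
        (differentiable_contMDiffMap g z)) v)

lemma dirDeriv_continuousLinearMap (v : E) (φ : E →L[ℝ] ℝ) :
    dirDeriv v (φ : C^∞⟮𝓘(ℝ, E), E; ℝ⟯) = algebraMap ℝ _ (φ v) := by
  ext z
  exact congr($(φ.fderiv) v)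

lemma commute_dirDeriv (v w : E) :
    Commute (dirDeriv v : Module.End ℝ C^∞⟮𝓘(ℝ, E), E; ℝ⟯) (dirDeriv w) := by
  have dirDeriv_dirDeriv (v w : E) (f : C^∞⟮𝓘(ℝ, E), E; ℝ⟯) (z : E) :
      dirDeriv v (dirDeriv w f) z = fderiv ℝ (fderiv ℝ f) z v w := by
    change fderiv ℝ (fun z => fderiv ℝ f z w) z v = _
    rw [fderiv_clm_apply ((contDiff_fderiv_contMDiffMap f).differentiable (by simp) z)
      (by fun_prop)]
    simp
  ext f z
  have hsymm : IsSymmSndFDerivAt ℝ f z :=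
    f.contMDiff.contDiff.contDiffAt.isSymmSndFDerivAt (by
      rw [minSmoothness_of_isRCLikeNormedField]
      exact WithTop.coe_le_coe.2 le_top)
  exact (dirDeriv_dirDeriv v w f z).trans ((hsymm v w).trans (dirDeriv_dirDeriv w v f z).symm)

lemma sum_contMDiffMap_apply {ι : Type*} (s : Finset ι) (f : ι → C^∞⟮𝓘(ℝ, E), E; ℝ⟯) (z : E) :
    (∑ i ∈ s, f i) z = ∑ i ∈ s, f i z :=
  map_sum (ContMDiffMap.evalRingHom z) f s

lemma aeval_contMDiffMap_apply {κ : Type*} (x : κ → C^∞⟮𝓘(ℝ, E), E; ℝ⟯)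
    (P : MvPolynomial κ ℝ) (z : E) : aeval x P z = eval (fun k => x k z) P := by
  let evalAt : C^∞⟮𝓘(ℝ, E), E; ℝ⟯ →ₐ[ℝ] ℝ :=
    (Pi.evalAlgHom ℝ (fun _ : E => ℝ) z).comp ContMDiffMap.coeFnAlgHom
  exact comp_aeval_apply x evalAt P

end SmoothFunctions

section ProductCoordinates

variable {n p : ℕ}

/-- Smooth real functions of `(x, ξ) ∈ ℝⁿ × ℝᵖ`. -/
abbrev SmoothProdFun (n p : ℕ) : Type :=
  C^∞⟮𝓘(ℝ, (Fin n → ℝ) × (Fin p → ℝ)), (Fin n → ℝ) × (Fin p → ℝ); ℝ⟯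

/-- The standard basis of `ℝⁿ × ℝᵖ`, with `x`-directions `inl` and `ξ`-directions `inr`. -/
def prodBasis : Fin n ⊕ Fin p → (Fin n → ℝ) × (Fin p → ℝ) :=
  Sum.elim (fun i => (Pi.single i 1, 0)) fun l => (0, Pi.single l 1)

/-- The coordinate functions of `ℝⁿ × ℝᵖ`. -/
def prodCoord : Fin n ⊕ Fin p → SmoothProdFun n p :=
  Sum.elim
    (fun i => ↑((ContinuousLinearMap.proj i : (Fin n → ℝ) →L[ℝ] ℝ) ∘L .fst ℝ _ (Fin p → ℝ)))
    fun l => ↑((ContinuousLinearMap.proj l : (Fin p → ℝ) →L[ℝ] ℝ) ∘L .snd ℝ (Fin n → ℝ) _)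

/-- The coordinate derivations `∂_{x_i}` and `∂_{ξ_l}`. -/
def prodPartial (n p : ℕ) (k : Fin n ⊕ Fin p) :
    Derivation ℝ (SmoothProdFun n p) (SmoothProdFun n p) :=
  dirDeriv (prodBasis k)

lemma prodPartial_prodCoord (k j : Fin n ⊕ Fin p) :
    prodPartial n p k (prodCoord j) = Pi.single (M := fun _ => SmoothProdFun n p) k 1 j := by
  cases j <;> refine (dirDeriv_continuousLinearMap _ _).trans ?_ <;> cases k <;>
    simp [prodBasis, Pi.single_apply, apply_ite (algebraMap ℝ (SmoothProdFun n p))]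

lemma commute_prodPartial (j k : Fin n ⊕ Fin p) :
    Commute (prodPartial n p j : Module.End ℝ (SmoothProdFun n p)) (prodPartial n p k) :=
  commute_dirDeriv _ _

lemma aeval_prodCoord_apply (P : MvPolynomial (Fin n ⊕ Fin p) ℝ)
    (z : (Fin n → ℝ) × (Fin p → ℝ)) :
    aeval prodCoord P z = eval (Sum.elim z.1 z.2) P := by
  rw [aeval_contMDiffMap_apply]
  congr 2
  ext (i | l) <;> rfl

/-- The vector field `∑ A_i(x) ∂_{x_i} + ∑ R_l(x, ξ) ∂_{ξ_l}`; the field `X_j` acting through `x`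
alone is the case `R = 0`. -/
def liftedField (A : Fin n → MvPolynomial (Fin n) ℝ) (R : Fin p → MvPolynomial (Fin n ⊕ Fin p) ℝ) :
    Module.End ℝ (SmoothProdFun n p) :=
  polyVectorField prodCoord (prodPartial n p) (Sum.elim (fun i => rename Sum.inl (A i)) R)

lemma liftedField_apply (A : Fin n → MvPolynomial (Fin n) ℝ)
    (R : Fin p → MvPolynomial (Fin n ⊕ Fin p) ℝ) (U : SmoothProdFun n p)
    (z : (Fin n → ℝ) × (Fin p → ℝ)) :
    liftedField A R U z =
      ∑ i, eval z.1 (A i) * fderiv ℝ U z (Pi.single i 1, 0) +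
        ∑ l, eval (Sum.elim z.1 z.2) (R l) * fderiv ℝ U z (0, Pi.single l 1) := by
  have eval_inl (i : Fin n) : eval z.1 (A i) = aeval prodCoord (rename Sum.inl (A i)) z := by
    rw [aeval_prodCoord_apply, eval_rename, Sum.elim_comp_inl]
  rw [liftedField, polyVectorField, LinearMap.sum_apply, sum_contMDiffMap_apply,
    Fintype.sum_sum_type]
  simp only [eval_inl, ← aeval_prodCoord_apply]
  rfl

/-- The operator `∂_x^α ∂_ξ^β` on smooth functions, with the factors ordered as in `pdMix`. -/
def mixedPartial (α : Fin n → ℕ) (β : Fin p → ℕ) : Module.End ℝ (SmoothProdFun n p) :=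
  (List.ofFn fun i => (prodPartial n p (.inl i) : Module.End ℝ (SmoothProdFun n p)) ^ α i).prod *
    (List.ofFn fun l => (prodPartial n p (.inr l) : Module.End ℝ (SmoothProdFun n p)) ^ β l).prod

lemma prodPartial_inl_mul_mixedPartial (α : Fin n → ℕ) (β : Fin p → ℕ) (i : Fin n) :
    (prodPartial n p (.inl i) : Module.End ℝ (SmoothProdFun n p)) * mixedPartial α β =
      mixedPartial (α + Pi.single i 1) β := by
  rw [mixedPartial, ← mul_assoc, mul_prod_ofFn_pow fun _ _ => commute_prodPartial _ _,
    mixedPartial]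

lemma prodPartial_inr_mul_mixedPartial (α : Fin n → ℕ) (β : Fin p → ℕ) (l : Fin p) :
    (prodPartial n p (.inr l) : Module.End ℝ (SmoothProdFun n p)) * mixedPartial α β =
      mixedPartial α (β + Pi.single l 1) := by
  have hcomm : Commute (prodPartial n p (.inr l) : Module.End ℝ (SmoothProdFun n p))
      (List.ofFn fun i =>
        (prodPartial n p (.inl i) : Module.End ℝ (SmoothProdFun n p)) ^ α i).prod := by
    refine Commute.list_prod_right _ _ fun T hT => ?_
    obtain ⟨i, rfl⟩ := List.mem_ofFn.1 hT
    exact (commute_prodPartial _ _).pow_right _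
  rw [mixedPartial, hcomm.left_comm, mul_prod_ofFn_pow fun _ _ => commute_prodPartial _ _,
    mixedPartial]

/-- The weight of each coordinate of `ℝⁿ × ℝᵖ` when only the `ξ`-variables count: `x_i` has weight
`0` and `ξ_l` has weight `τ l`, so that the weight of `x^α ξ^γ` is `H_E(γ)`. -/
def xiWeight (n : ℕ) (τ : Fin p → ℕ) : Fin n ⊕ Fin p → ℤ :=
  Sum.elim 0 fun l => (τ l : ℤ)

lemma weight_xiWeight (τ : Fin p → ℕ) (μ : Fin n ⊕ Fin p →₀ ℕ) :
    Finsupp.weight (xiWeight n τ) μ = (∑ l, μ (.inr l) * τ l : ℕ) := by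
  simp [Finsupp.weight_eq_sum, xiWeight]

lemma exists_prod_prodPartial_eq_mixedPartial (τ : Fin p → ℕ) (L : List (Fin n ⊕ Fin p)) :
    ∃ (α : Fin n → ℕ) (β : Fin p → ℕ), (L.map (xiWeight n τ)).sum = (∑ l, β l * τ l : ℕ) ∧
      (L.map fun k => (prodPartial n p k : Module.End ℝ (SmoothProdFun n p))).prod =
        mixedPartial α β := by
  induction L with
  | nil => exact ⟨0, 0, by simp, by simp [mixedPartial]⟩
  | cons k L ih =>
    obtain ⟨α, β, hweight, hprod⟩ := ih
    simp only [List.map_cons, List.sum_cons, List.prod_cons, hweight, hprod]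
    cases k with
    | inl i =>
      exact ⟨α + Pi.single i 1, β, by simp [xiWeight], prodPartial_inl_mul_mixedPartial α β i⟩
    | inr l =>
      refine ⟨α, β + Pi.single l 1, ?_, prodPartial_inr_mul_mixedPartial α β l⟩
      simp [xiWeight, add_mul, Finset.sum_add_distrib, Pi.single_apply, add_comm]

lemma coe_mixedPartial_apply (α : Fin n → ℕ) (β : Fin p → ℕ) (U : SmoothProdFun n p) :
    ⇑(mixedPartial α β U) = pdMix n p α β U := by
  have semiconj_pow (k : Fin n ⊕ Fin p) (m : ℕ) : Function.Semiconj
      ((⇑) : SmoothProdFun n p → (Fin n → ℝ) × (Fin p → ℝ) → ℝ)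
      ⇑((prodPartial n p k : Module.End ℝ (SmoothProdFun n p)) ^ m)
      (pdProd n p (prodBasis k))^[m] := by
    have hsemiconj : Function.Semiconj
        ((⇑) : SmoothProdFun n p → (Fin n → ℝ) × (Fin p → ℝ) → ℝ)
        (prodPartial n p k : Module.End ℝ (SmoothProdFun n p)) (pdProd n p (prodBasis k)) :=
      fun _ => rfl
    rw [Module.End.coe_pow]
    exact hsemiconj.iterate_right m
  rw [pdMix, foldr_comp_ofFn_apply, foldr_comp_ofFn_apply, mixedPartial, Module.End.mul_apply,
    List.ofFn_eq_map, List.ofFn_eq_map,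
    list_prod_apply_of_semiconj fun i => semiconj_pow (.inl i) (α i),
    list_prod_apply_of_semiconj fun l => semiconj_pow (.inr l) (β l)]
  rfl

/-- The operator `∑ c_{α,β,γ}(x) ξ^γ ∂_x^α ∂_ξ^β` attached to the finite family of polynomials
`c_{α,β,γ}`, indexed by triples `(α, β, γ)`. -/
def normalForm (n p : ℕ) :
    ((Fin n → ℕ) × (Fin p → ℕ) × (Fin p → ℕ) →₀ MvPolynomial (Fin n) ℝ) →ₗ[ℝ]
      Module.End ℝ (SmoothProdFun n p) :=
  Finsupp.lsum ℝ fun t =>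
    { toFun P := aeval prodCoord (rename Sum.inl P * ∏ l, X (.inr l) ^ t.2.2 l) •
        mixedPartial t.1 t.2.1
      map_add' P Q := by simp only [map_add, add_mul, add_smul]
      map_smul' c P := by simp only [map_smul, smul_mul_assoc, smul_assoc, RingHom.id_apply] }

lemma normalForm_apply
    (F : (Fin n → ℕ) × (Fin p → ℕ) × (Fin p → ℕ) →₀ MvPolynomial (Fin n) ℝ)
    (U : SmoothProdFun n p) (z : (Fin n → ℝ) × (Fin p → ℝ)) :
    normalForm n p F U z = ∑ t ∈ F.support,
      eval z.1 (F t) * (∏ l, z.2 l ^ t.2.2 l) * pdMix n p t.1 t.2.1 U z := by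
  rw [normalForm, Finsupp.lsum_apply, Finsupp.sum, LinearMap.sum_apply, sum_contMDiffMap_apply]
  refine Finset.sum_congr rfl fun t _ => ?_
  change aeval prodCoord _ z * mixedPartial t.1 t.2.1 U z = _
  rw [aeval_prodCoord_apply, coe_mixedPartial_apply, map_mul, eval_rename, Sum.elim_comp_inl]
  simp

lemma weightFiltration_le_map_normalForm (τ : Fin p → ℕ) :
    weightFiltration prodCoord (prodPartial n p) (xiWeight n τ) (-1) ≤
      (Finsupp.supported (MvPolynomial (Fin n) ℝ) ℝ
        {t | (∑ l, t.2.2 l * τ l) + 1 ≤ ∑ l, t.2.1 l * τ l}).map (normalForm n p) := by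
  refine Submodule.span_le.2 ?_
  rintro _ ⟨P, L, hP, rfl⟩
  obtain ⟨α, β, hL, hprod⟩ := exists_prod_prodPartial_eq_mixedPartial τ L
  rw [hprod, P.as_sum, map_sum, Finset.sum_smul]
  refine sum_mem fun μ hμ => ?_
  refine ⟨Finsupp.single (α, β, fun l => μ (.inr l))
    (monomial (Finsupp.sumFinsuppEquivProdFinsupp μ).1 (coeff μ P)),
    Finsupp.single_mem_supported _ _ ?_, ?_⟩
  · have hweight := mem_weightLE.1 hP μ hμ
    rw [weight_xiWeight, hL] at hweight
    change (∑ l, μ (.inr l) * τ l) + 1 ≤ ∑ l, β l * τ l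
    omega
  · rw [normalForm, Finsupp.lsum_single, monomial_eq_rename_inl_mul_prod μ (coeff μ P)]
    rfl

lemma rename_inl_mem_weightLE (τ : Fin p → ℕ) (P : MvPolynomial (Fin n) ℝ) :
    rename Sum.inl P ∈ weightLE ℝ (xiWeight n τ) 0 := by
  refine mem_weightLE.2 fun μ hμ => ?_
  obtain ⟨μ', rfl, -⟩ := coeff_rename_ne_zero _ _ _ (mem_support_iff.1 hμ)
  have hzero (l : Fin p) : (μ'.mapDomain (Sum.inl : Fin n → Fin n ⊕ Fin p)) (.inr l) = 0 :=
    Finsupp.mapDomain_of_notMem_range _ _ (by simp)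
  simp [weight_xiWeight, hzero]

theorem exists_normalForm_eq_prod_liftedField_sub_prod {J : Type*} {τ : Fin p → ℕ}
    (A : J → Fin n → MvPolynomial (Fin n) ℝ) {R : J → Fin p → MvPolynomial (Fin n ⊕ Fin p) ℝ}
    (hR : ∀ j l, ∀ μ ∈ (R j l).support, ∑ l', μ (.inr l') * τ l' < τ l) (L : List J) :
    ∃ F ∈ Finsupp.supported (MvPolynomial (Fin n) ℝ) ℝ
        {t : (Fin n → ℕ) × (Fin p → ℕ) × (Fin p → ℕ) |
          (∑ l, t.2.2 l * τ l) + 1 ≤ ∑ l, t.2.1 l * τ l},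
      normalForm n p F =
        (L.map fun j => liftedField (A j) (R j)).prod -
          (L.map fun j => liftedField (A j) 0).prod := by
  let P (j : J) : Fin n ⊕ Fin p → MvPolynomial (Fin n ⊕ Fin p) ℝ :=
    Sum.elim (fun i => rename Sum.inl (A j i)) 0
  let Q (j : J) : Fin n ⊕ Fin p → MvPolynomial (Fin n ⊕ Fin p) ℝ := Sum.elim 0 (R j)
  have hP (j : J) (k : Fin n ⊕ Fin p) : P j k ∈ weightLE ℝ (xiWeight n τ) (xiWeight n τ k) := by
    cases k with
    | inl i => exact rename_inl_mem_weightLE τ (A j i)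
    | inr l => exact zero_mem _
  have hQ (j : J) (k : Fin n ⊕ Fin p) :
      Q j k ∈ weightLE ℝ (xiWeight n τ) (-1 + xiWeight n τ k) := by
    cases k with
    | inl i => exact zero_mem _
    | inr l =>
      refine mem_weightLE.2 fun μ hμ => ?_
      have hlt := hR j l μ hμ
      rw [weight_xiWeight, xiWeight, Sum.elim_inr]
      omega
  have hsum (j : J) : P j + Q j = Sum.elim (fun i => rename Sum.inl (A j i)) (R j) := by
    ext (i | l) <;> simp [P, Q]
  have hmem := prod_polyVectorField_add_sub_prod_mem_weightFiltration
    prodPartial_prodCoord (by simp) hP hQ L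
  simp only [hsum] at hmem
  exact weightFiltration_le_map_normalForm τ hmem

end ProductCoordinates

theorem stmt_0_general {J : Type*} {n p : ℕ} (τ : Fin p → ℕ)
    (A : J → Fin n → MvPolynomial (Fin n) ℝ)
    (R : J → Fin p → MvPolynomial (Fin n ⊕ Fin p) ℝ)
    (hR : ∀ j l, ∀ μ ∈ (R j l).support, ∑ l', μ (.inr l') * τ l' < τ l)
    (X Xt : J → ((Fin n → ℝ) × (Fin p → ℝ) → ℝ) → (Fin n → ℝ) × (Fin p → ℝ) → ℝ)
    (hX : ∀ j U z, X j U z = ∑ i, eval z.1 (A j i) * fderiv ℝ U z (Pi.single i 1, 0))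
    (hXt : ∀ j U z, Xt j U z =
      X j U z + ∑ l, eval (Sum.elim z.1 z.2) (R j l) * fderiv ℝ U z (0, Pi.single l 1))
    (L : List J) :
    ∃ S : Finset ((Fin n → ℕ) × (Fin p → ℕ) × (Fin p → ℕ)),
    ∃ c : (Fin n → ℕ) → (Fin p → ℕ) → (Fin p → ℕ) → (Fin n → ℝ) → ℝ,
      (∀ t ∈ S, t.2.1 ≠ 0 ∧ (∑ l, t.2.2 l * τ l) + 1 ≤ ∑ l, t.2.1 l * τ l) ∧
      (∀ α β γ, ∃ P : MvPolynomial (Fin n) ℝ, ∀ x, c α β γ x = eval x P) ∧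
      (∀ U : (Fin n → ℝ) × (Fin p → ℝ) → ℝ, ContDiff ℝ ∞ U →
        ∀ z : (Fin n → ℝ) × (Fin p → ℝ),
          L.foldl (fun V j => Xt j V) U z - L.foldl (fun V j => X j V) U z =
            ∑ t ∈ S, c t.1 t.2.1 t.2.2 z.1 * (∏ l, z.2 l ^ t.2.2 l) *
              pdMix n p t.1 t.2.1 U z) := by
  have semiconj_X (j : J) : Function.Semiconj
      ((⇑) : SmoothProdFun n p → (Fin n → ℝ) × (Fin p → ℝ) → ℝ) (liftedField (A j) 0) (X j) :=
    fun U => funext fun z => by simp [liftedField_apply, hX]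
  have semiconj_Xt (j : J) : Function.Semiconj
      ((⇑) : SmoothProdFun n p → (Fin n → ℝ) × (Fin p → ℝ) → ℝ) (liftedField (A j) (R j)) (Xt j) :=
    fun U => funext fun z => by rw [liftedField_apply, hXt, hX]
  obtain ⟨F, hF, hFdiff⟩ := exists_normalForm_eq_prod_liftedField_sub_prod A hR L.reverse
  refine ⟨F.support, fun α β γ x => eval x (F (α, β, γ)), fun t ht => ?_,
    fun α β γ => ⟨_, fun _ => rfl⟩, fun U hU z => ?_⟩
  · have hweight := (Finsupp.mem_supported _ _).1 hF ht
    refine ⟨fun hβ => ?_, hweight⟩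
    simp [hβ] at hweight
  · let V : SmoothProdFun n p := ⟨U, hU.contMDiff⟩
    have hXt_foldl := congrFun (list_prod_apply_of_semiconj semiconj_Xt L.reverse V) z
    have hX_foldl := congrFun (list_prod_apply_of_semiconj semiconj_X L.reverse V) z
    rw [List.foldr_reverse] at hXt_foldl hX_foldl
    refine (congrArg₂ (· - ·) hXt_foldl hX_foldl).symm.trans ?_
    exact (congr($hFdiff V z)).symm.trans (normalForm_apply F V z)
/-- Let `X_j = Σ_i a_{j,i}(x) ∂_{x_i}` be vector fields on `ℝⁿ` with
polynomial coefficients, `δ_λ`-homogeneous of degree `ν_j`, and let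
`X̃_j = X_j + Σ_l r_{j,l}(x,ξ) ∂_{ξ_l}` on `ℝᴺ = ℝⁿ×ℝᵖ` with polynomial `r_{j,l}`,
`D_λ`-homogeneous of degree `ν_j`.  Then for all indices `i₁,…,i_k ∈ {1,…,m}` (`k ≥ 1`)
the difference `X̃_{i_k}⋯X̃_{i_1} − X_{i_k}⋯X_{i_1}` can be written as a finite sum
`Σ_{(α,β)} (Σ_{H_E(γ) ≤ H_E(β)−1} c_{α,β,γ}(x) ξ^γ) ∂_x^α ∂_ξ^β` with `β ≠ 0` and
polynomial coefficients `c_{α,β,γ}` depending only on `x`.  (Here the sum over pairs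
`(α,β)` and admissible `γ` is encoded as a finite sum over triples `(α,β,γ)`.) -/
theorem stmt_0 (n p m : ℕ) (hn : 0 < n) (hp : 0 < p) (hm : 0 < m)
    (σ : Fin n → ℕ) (τ : Fin p → ℕ) (ν : Fin m → ℕ)
    (hσ : ∀ i, 0 < σ i) (hτ : ∀ l, 0 < τ l) (hν : ∀ j, 0 < ν j)
    -- the coefficients of the `X_j`: polynomial and `δ_λ`-homogeneous of degree `σ_i − ν_j`
    (a : Fin m → Fin n → (Fin n → ℝ) → ℝ)
    (haPoly : ∀ j i, ∃ P : MvPolynomial (Fin n) ℝ, ∀ x, a j i x = MvPolynomial.eval x P)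
    (haHom : ∀ j i, ∀ lam : ℝ, 0 < lam → ∀ x : Fin n → ℝ,
      a j i (fun i' => lam ^ (σ i') * x i') = lam ^ ((σ i : ℤ) - (ν j : ℤ)) * a j i x)
    -- the extra coefficients of the `X̃_j`: polynomial and `D_λ`-homogeneous of
    -- degree `τ_l − ν_j`
    (r : Fin m → Fin p → ((Fin n → ℝ) × (Fin p → ℝ)) → ℝ)
    (hrPoly : ∀ j l, ∃ P : MvPolynomial (Fin n ⊕ Fin p) ℝ,
      ∀ (x : Fin n → ℝ) (ξ : Fin p → ℝ),
        r j l (x, ξ) = MvPolynomial.eval (Sum.elim x ξ) P)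
    (hrHom : ∀ j l, ∀ lam : ℝ, 0 < lam → ∀ (x : Fin n → ℝ) (ξ : Fin p → ℝ),
      r j l (fun i => lam ^ (σ i) * x i, fun l' => lam ^ (τ l') * ξ l')
        = lam ^ ((τ l : ℤ) - (ν j : ℤ)) * r j l (x, ξ))
    -- `X_j` acting on functions of `(x,ξ)` through the `x`-variables only
    (X : Fin m → (((Fin n → ℝ) × (Fin p → ℝ)) → ℝ) → ((Fin n → ℝ) × (Fin p → ℝ)) → ℝ)
    (hXdef : ∀ j U z, X j U z = ∑ i, a j i z.1 * fderiv ℝ U z (Pi.single i 1, 0))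
    -- the lifted vector fields `X̃_j = X_j + R_j`
    (Xt : Fin m → (((Fin n → ℝ) × (Fin p → ℝ)) → ℝ) → ((Fin n → ℝ) × (Fin p → ℝ)) → ℝ)
    (hXtdef : ∀ j U z, Xt j U z =
      X j U z + ∑ l, r j l z * fderiv ℝ U z (0, Pi.single l 1)) :
    ∀ (k : ℕ), 1 ≤ k → ∀ ι : Fin k → Fin m,
      ∃ S : Finset ((Fin n → ℕ) × (Fin p → ℕ) × (Fin p → ℕ)),
      ∃ c : (Fin n → ℕ) → (Fin p → ℕ) → (Fin p → ℕ) → (Fin n → ℝ) → ℝ,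
        (∀ t ∈ S, t.2.1 ≠ 0 ∧ (∑ l, t.2.2 l * τ l) + 1 ≤ ∑ l, t.2.1 l * τ l) ∧
        (∀ α β γ, ∃ P : MvPolynomial (Fin n) ℝ,
          ∀ x, c α β γ x = MvPolynomial.eval x P) ∧
        (∀ U : ((Fin n → ℝ) × (Fin p → ℝ)) → ℝ, ContDiff ℝ (⊤ : ℕ∞) U →
          ∀ z : (Fin n → ℝ) × (Fin p → ℝ),
            (List.ofFn ι).foldl (fun V j => Xt j V) U z
              - (List.ofFn ι).foldl (fun V j => X j V) U z
            = ∑ t ∈ S,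
                c t.1 t.2.1 t.2.2 z.1 * (∏ l, z.2 l ^ (t.2.2 l))
                  * pdMix n p t.1 t.2.1 U z) := by
  choose A hA using haPoly
  choose R hR using hrPoly
  have hweight (j : Fin m) (l : Fin p) (μ : Fin n ⊕ Fin p →₀ ℕ) (hμ : μ ∈ (R j l).support) :
      ∑ l', μ (.inr l') * τ l' < τ l :=
    sum_inr_mul_lt_of_eval_pow_mul (hν j) one_lt_two
      (fun x ξ => by simpa only [hR] using hrHom j l 2 two_pos x ξ) hμ
  exact fun k _ ι => stmt_0_general τ A R hweight X Xt (by simpa only [hA] using hXdef)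
    (fun j U z => by simpa only [← hR] using hXtdef j U z) (List.ofFn ι)

end
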